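/- For c ∈ ℂ, the homogeneous polynomial P − cQ is irreducible in ℂ[x,y,z] if and only if c ∉ {0, 1}; that is, among the fibers of F over ℂ = ℙ¹ \ {∞}, exactly the fibers over 0 and 1 are reducible. -/

import Mathlib

open MvPolynomial

/-- The linear form `R_k = (2d+1-k)x + ky - k(2d+1-k)z` in `ℂ[x,y,z]`. -/
noncomputable def R3 (d k : ℕ) : MvPolynomial (Fin 3) ℂ :=
  C (2*(d:ℂ)+1-(k:ℂ)) * X 0 + C (k:ℂ) * X 1 - C ((k:ℂ)*(2*(d:ℂ)+1-(k:ℂ))) * X 2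

/-- `P = ∏_{k=0}^{d} R_k`. -/
noncomputable def P3 (d : ℕ) : MvPolynomial (Fin 3) ℂ :=
  ∏ k ∈ Finset.range (d+1), R3 d k

/-- `Q = ∏_{k=d+1}^{2d+1} R_k`. -/
noncomputable def Q3 (d : ℕ) : MvPolynomial (Fin 3) ℂ :=
  ∏ k ∈ Finset.Icc (d+1) (2*d+1), R3 d k

/-!
The lines `R_k` belong to the family of tangents of a conic, so a point of the plane is given by the
two tangents `R_α` and `R_{2d+1-γ}` through it, and there `R_k` takes the value
`(α - k)(2d+1-γ - k)`. With `p(t) = t(t-1)⋯(t-d)` and `f(t) = p(t) / p(2d+1-t)`, the map `P / Q`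
becomes `f(α) / f(γ)`.

Suppose `P - cQ = AB` with `A` and `B` of degree at most `d`, and `c ≠ 0`. On each of the `d + 1`
lines `α = i`, `0 ≤ i ≤ d`, the product `AB` is a multiple of `p(γ)`, which has only real roots;
interpolating between these lines, `A` and `B` are real up to scalars at all real `(α, γ)`, and
so `c` is real. The exchange of `x` and `y` exchanges `P` and `Q`, so one may take `|c| ≥ 1`. The
function `f` increases from a negative minimum `f(e)`, `d - 1 < e < d`, to infinity at `d + 1`, and
`f(e) ≤ f < -f(e)` on `[0, d]`. So for `c ≠ 1` the equation `f(t) = c f(γ)` has a root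
`γ = g(t) > e` depending continuously on `t ∈ [0, d]`, with `g(i) = d` for `i = 0, …, d`. It is a
simple root, hence at each point of this arc exactly one of `A` and `B` vanishes, and by
connectedness it is always the same one. This factor vanishes at the `d + 1` points `(i, d)` of the
line `γ = d`, hence on that line, but `P - cQ` does not.

For `c = 0` the polynomial is a product of linear forms, and for `c = 1` it is divisible by `x - y`.
-/

section RealUpToScalar

variable {F K : Type*} [Field F] [Field K] [Algebra F K]

theorem eval_mem_span_eval_of_splits_of_roots_mem_range {g : Polynomial K} (hs : g.Splits)
    (hr : ∀ a ∈ g.roots, a ∈ (algebraMap F K).range) (x y : F)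
    (hy : g.eval (algebraMap F K y) ≠ 0) :
    g.eval (algebraMap F K x) ∈ Submodule.span F {g.eval (algebraMap F K y)} := by
  have hg : g.leadingCoeff ≠ 0 := by
    rintro h
    simp [Polynomial.leadingCoeff_eq_zero.mp h] at hy
  obtain ⟨u, hu⟩ := (Polynomial.mem_lifts _).mp <|
    (hs.C_mul g.leadingCoeff⁻¹).mem_lift_of_roots_mem_range
      (Polynomial.monic_C_mul_of_mul_leadingCoeff_eq_one (inv_mul_cancel₀ hg)) (algebraMap F K)
      (by rwa [Polynomial.roots_C_mul _ (inv_ne_zero hg)])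
  have heval (z : F) :
      g.eval (algebraMap F K z) = g.leadingCoeff * algebraMap F K (u.eval z) := by
    rw [← Polynomial.eval_map_apply, hu, Polynomial.eval_mul, Polynomial.eval_C,
      mul_inv_cancel_left₀ hg]
  have huy : algebraMap F K (u.eval y) ≠ 0 := right_ne_zero_of_mul (heval y ▸ hy)
  refine Submodule.mem_span_singleton.mpr ⟨u.eval x / u.eval y, ?_⟩
  rw [heval, heval, Algebra.smul_def, map_div₀]
  field_simp

theorem eval_mem_of_forall_eval_node_mem {ι : Type*} {S : Submodule F K} {g : Polynomial K}
    {s : Finset ι} {v : ι → F} (hv : Set.InjOn v s) (hg : g.degree < s.card)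
    (h : ∀ i ∈ s, g.eval (algebraMap F K (v i)) ∈ S) (x : F) :
    g.eval (algebraMap F K x) ∈ S := by
  classical
  have hbasis (i : ι) : (Lagrange.basis s (fun j ↦ algebraMap F K (v j)) i).eval
      (algebraMap F K x) = algebraMap F K ((Lagrange.basis s v i).eval x) := by
    simp [Lagrange.basis, Lagrange.basisDivisor, Polynomial.eval_prod]
  rw [Lagrange.eq_interpolate ((algebraMap F K).injective.comp_injOn hv) hg,
    Lagrange.interpolate_apply, Polynomial.eval_finsetSum]
  refine S.sum_mem fun i hi ↦ ?_
  simp only [Function.comp_apply, Function.comp_def, Polynomial.eval_mul, Polynomial.eval_C,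
    hbasis, mul_comm _ (algebraMap F K _), ← Algebra.smul_def]
  exact S.smul_mem _ (h i hi)

end RealUpToScalar

theorem forall_eq_zero_or_forall_eq_zero_of_isPreconnected {T M : Type*} [TopologicalSpace T]
    [TopologicalSpace M] [T1Space M] [Zero M] {s : Set T} (hs : IsPreconnected s)
    (hs' : IsClosed s) {u v : T → M} (hu : ContinuousOn u s) (hv : ContinuousOn v s)
    (h : ∀ t ∈ s, u t = 0 ↔ v t ≠ 0) :
    (∀ t ∈ s, u t = 0) ∨ ∀ t ∈ s, v t = 0 := by
  have hdich := (isPreconnected_iff_subset_of_fully_disjoint_closed hs').mp hs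
    (s ∩ u ⁻¹' {0}) (s ∩ v ⁻¹' {0})
    (hu.preimage_isClosed_of_isClosed hs' isClosed_singleton)
    (hv.preimage_isClosed_of_isClosed hs' isClosed_singleton)
    (fun t ht ↦ by
      by_cases hvt : v t = 0
      · exact Or.inr ⟨ht, hvt⟩
      · exact Or.inl ⟨ht, (h t ht).mpr hvt⟩)
    (Set.disjoint_left.mpr fun t htu htv ↦ (h t htu.1).mp htu.2 htv.2)
  exact hdich.imp (fun hsub t ht ↦ (hsub ht).2) (fun hsub t ht ↦ (hsub ht).2)

theorem continuousOn_invFunOn_of_strictMonoOn {α β : Type*} [LinearOrder α] [TopologicalSpace α]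
    [OrderTopology α] [DenselyOrdered α] [LinearOrder β] [TopologicalSpace β] [OrderTopology β]
    [Nonempty α] {f : α → β} {s : Set α} (hf : StrictMonoOn f s) (hs : IsOpen s)
    (hfs : IsOpen (f '' s)) : ContinuousOn (Function.invFunOn f s) (f '' s) := by
  have hmono : StrictMonoOn (Function.invFunOn f s) (f '' s) := by
    rintro _ ⟨a, ha, rfl⟩ _ ⟨b, hb, rfl⟩ hab
    rwa [hf.injOn.leftInvOn_invFunOn ha, hf.injOn.leftInvOn_invFunOn hb, ← hf.lt_iff_lt ha hb]
  rintro _ ⟨a, ha, rfl⟩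
  refine (hmono.continuousAt_of_image_mem_nhds (hfs.mem_nhds ⟨a, ha, rfl⟩) ?_).continuousWithinAt
  rw [hf.injOn.leftInvOn_invFunOn.image_image, hf.injOn.leftInvOn_invFunOn ha]
  exact hs.mem_nhds ha

theorem lt_div_of_one_le_abs {𝕜 : Type*} [Field 𝕜] [LinearOrder 𝕜] [IsStrictOrderedRing 𝕜]
    {m v c : 𝕜} (hm : m < 0) (hlow : m ≤ v) (hupp : v < -m) (hc : 1 ≤ |c|) (hc1 : c ≠ 1) :
    m < v / c := by
  rcases le_abs.mp hc with h | h
  · have hlt : 1 < c := h.lt_of_ne hc1.symm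
    exact (lt_div_iff₀ (zero_lt_one.trans hlt)).mpr (by nlinarith)
  · have hneg : c < 0 := by linarith
    exact (lt_div_iff_of_neg hneg).mpr (by nlinarith)

section Irreducibility

variable {σ K : Type*} [Field K]

theorem irreducible_of_forall_eq_mul_totalDegree_le {f : MvPolynomial σ K} {n : ℕ}
    (hf : ¬ IsUnit f) (hdeg : f.totalDegree ≤ n + 1)
    (h : ∀ A B, f = A * B → A.totalDegree ≤ n → B.totalDegree ≤ n → False) : Irreducible f := by
  refine ⟨hf, fun A B hAB ↦ ?_⟩
  have hf0 : A * B ≠ 0 := fun h0 ↦ h 0 0 (by simp [hAB, h0]) (by simp) (by simp)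
  obtain ⟨hA0, hB0⟩ := ne_zero_and_ne_zero_of_mul hf0
  have isUnit_of {g : MvPolynomial σ K} (hg : g ≠ 0) (hg' : g.totalDegree = 0) : IsUnit g := by
    obtain ⟨a, rfl⟩ : ∃ a, g = C a := ⟨_, totalDegree_eq_zero_iff_eq_C.mp hg'⟩
    exact (isUnit_iff_ne_zero.mpr fun ha ↦ hg (by simp [ha])).map C
  rw [hAB, totalDegree_mul_of_isDomain hA0 hB0] at hdeg
  by_contra! hcon
  have hA := mt (isUnit_of hA0) hcon.1
  have hB := mt (isUnit_of hB0) hcon.2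
  exact h A B hAB (by lia) (by lia)

theorem not_isUnit_of_eval_eq_zero {A : MvPolynomial σ K} {u : σ → K} (h : eval u A = 0) :
    ¬ IsUnit A :=
  fun hA ↦ not_isUnit_zero (h ▸ hA.map (eval u))

theorem not_irreducible_mul_of_eval_eq_zero {A B : MvPolynomial σ K} {u v : σ → K}
    (hA : eval u A = 0) (hB : eval v B = 0) : ¬ Irreducible (A * B) := fun h ↦
  (h.isUnit_or_isUnit rfl).elim (not_isUnit_of_eval_eq_zero hA) (not_isUnit_of_eval_eq_zero hB)

end Irreducibility

theorem X_sub_X_dvd_sub_rename_swap {σ R : Type*} [DecidableEq σ] [CommRing R] (i j : σ)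
    (g : MvPolynomial σ R) : X i - X j ∣ g - rename (Equiv.swap i j) g := by
  let I : Ideal (MvPolynomial σ R) := Ideal.span {X i - X j}
  have hij : Ideal.Quotient.mkₐ R I (X i) = Ideal.Quotient.mkₐ R I (X j) :=
    Ideal.Quotient.eq.mpr (Ideal.mem_span_singleton_self _)
  have h : Ideal.Quotient.mkₐ R I = (Ideal.Quotient.mkₐ R I).comp (rename (Equiv.swap i j)) := by
    refine algHom_ext fun k ↦ ?_
    rw [AlgHom.comp_apply, rename_X]
    exact (Equiv.apply_swap_eq_self (v := fun k ↦ Ideal.Quotient.mkₐ R I (X k)) hij k).symm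
  rw [← Ideal.mem_span_singleton, ← Ideal.Quotient.eq]
  exact DFunLike.congr_fun h g

section DescPochhammer

theorem descPochhammer_eval_eq_zero_iff {R : Type*} [CommRing R] [IsDomain R] {n : ℕ} {r : R} :
    (descPochhammer R n).eval r = 0 ↔ ∃ k < n, r = k := by
  simp [descPochhammer_eval_eq_prod_range, Finset.prod_eq_zero_iff, sub_eq_zero]

theorem descPochhammer_eval_sub_natCast_ne_zero {R : Type*} [CommRing R] [IsDomain R]
    [CharZero R] {d i : ℕ} (hi : i ≤ d) :
    (descPochhammer R (d + 1)).eval (2 * d + 1 - i : R) ≠ 0 := fun h ↦ by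
  obtain ⟨k, hk, hki⟩ := descPochhammer_eval_eq_zero_iff.mp h
  have : 2 * d + 1 = k + i := by exact_mod_cast sub_eq_iff_eq_add.mp hki
  lia

theorem descPochhammer_eval_two_mul_add_one_ne_zero {R : Type*} [CommRing R] [IsDomain R]
    [CharZero R] (d : ℕ) : (descPochhammer R (d + 1)).eval (2 * d + 1 : R) ≠ 0 := by
  simpa using descPochhammer_eval_sub_natCast_ne_zero (R := R) d.zero_le

theorem descPochhammer_eval_natCast_sub {R : Type*} [CommRing R] (n : ℕ) (r : R) :
    (descPochhammer R (n + 1)).eval (n - r) =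
      (-1) ^ (n + 1) * (descPochhammer R (n + 1)).eval r := by
  rw [descPochhammer_eval_eq_prod_range, descPochhammer_eval_eq_prod_range,
    ← Finset.prod_range_reflect, ← Finset.card_range (n + 1), ← Finset.prod_const,
    Finset.card_range, ← Finset.prod_mul_distrib]
  refine Finset.prod_congr rfl fun k hk ↦ ?_
  rw [Nat.add_sub_cancel, Nat.cast_sub (Finset.mem_range_succ_iff.mp hk)]
  ring

theorem descPochhammer_eval_add_one_mul {R : Type*} [CommRing R] (n : ℕ) (r : R) :
    (descPochhammer R n).eval (r + 1) * (r + 1 - n) = (r + 1) * (descPochhammer R n).eval r := by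
  rw [← descPochhammer_succ_eval, descPochhammer_succ_left]
  simp

theorem descPochhammer_eval_ofReal (n : ℕ) (x : ℝ) :
    (descPochhammer ℂ n).eval (x : ℂ) = (descPochhammer ℝ n).eval x := by
  rw [← descPochhammer_map Complex.ofRealHom, ← Complex.ofRealHom_eq_coe,
    Polynomial.eval_map_apply, Complex.ofRealHom_eq_coe]

variable {d : ℕ} {x : ℝ}

theorem descPochhammer_eval_neg (hx : x ∈ Set.Ioo (d - 1 : ℝ) d) :
    (descPochhammer ℝ (d + 1)).eval x < 0 := by
  rw [descPochhammer_succ_eval]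
  exact mul_neg_of_pos_of_neg (descPochhammer_pos hx.1) (sub_neg.mpr hx.2)

theorem deriv_descPochhammer_eval_pos (hx : (d : ℝ) ≤ x) :
    0 < deriv (descPochhammer ℝ (d + 1)).eval x := by
  have hle {j : ℕ} (hj : j ∈ Finset.range (d + 1)) : (j : ℝ) ≤ d :=
    Nat.cast_le.mpr (Finset.mem_range_succ_iff.mp hj)
  rw [deriv_descPochhammer_eval_eq_sum_prod_range_erase]
  refine Finset.sum_pos' (fun i _ ↦ Finset.prod_nonneg fun j hj ↦
    sub_nonneg.mpr ((hle (Finset.mem_of_mem_erase hj)).trans hx))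
    ⟨d, Finset.self_mem_range_succ d, Finset.prod_pos fun j hj ↦ ?_⟩
  exact sub_pos.mpr <| ((hle (Finset.mem_of_mem_erase hj)).lt_of_ne
    (Nat.cast_injective.ne (Finset.ne_of_mem_erase hj))).trans_le hx

theorem strictMonoOn_descPochhammer_eval (d : ℕ) :
    StrictMonoOn (descPochhammer ℝ (d + 1)).eval (Set.Ici (d : ℝ)) :=
  strictMonoOn_of_deriv_pos (convex_Ici _) (Polynomial.continuous _).continuousOn fun _ hx ↦
    deriv_descPochhammer_eval_pos (interior_subset hx)

end DescPochhammer

/-- The ratio `p(x) / p(2d+1-x)`, where `p(x) = x(x-1)⋯(x-d)`. In the coordinates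
`(α, γ)` of `tangentPt`, the function `P / Q` is `nodeRatio d α / nodeRatio d γ`. The ratio is used
for `x < d + 1` only, where the denominator is positive. -/
noncomputable def nodeRatio (d : ℕ) (x : ℝ) : ℝ :=
  (descPochhammer ℝ (d + 1)).eval x / (descPochhammer ℝ (d + 1)).eval (2 * d + 1 - x)

section NodeRatio

variable {d : ℕ} {x y e : ℝ}

theorem nodeRatio_denom_pos (hx : x < d + 1) :
    0 < (descPochhammer ℝ (d + 1)).eval (2 * d + 1 - x) :=
  descPochhammer_pos (by push_cast; linarith)

theorem nodeRatio_eq_zero_iff (hx : x < d + 1) :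
    nodeRatio d x = 0 ↔ (descPochhammer ℝ (d + 1)).eval x = 0 := by
  rw [nodeRatio, div_eq_zero_iff, or_iff_left (nodeRatio_denom_pos hx).ne']

theorem nodeRatio_natCast {i : ℕ} (hi : i ≤ d) : nodeRatio d i = 0 := by
  rw [nodeRatio, descPochhammer_eval_coe_nat_of_lt (Nat.lt_succ_of_le hi), zero_div]

theorem eq_natCast_of_nodeRatio_eq_zero (hx : x ∈ Set.Ioo (d - 1 : ℝ) (d + 1))
    (hx0 : nodeRatio d x = 0) : x = d := by
  obtain ⟨k, hk, rfl⟩ := descPochhammer_eval_eq_zero_iff.mp ((nodeRatio_eq_zero_iff hx.2).mp hx0)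
  have hdk : d < k + 1 := by exact_mod_cast sub_lt_iff_lt_add.mp hx.1
  rw [show k = d by lia]

theorem nodeRatio_neg (hx : x ∈ Set.Ioo (d - 1 : ℝ) d) : nodeRatio d x < 0 :=
  div_neg_of_neg_of_pos (descPochhammer_eval_neg hx) (nodeRatio_denom_pos (by linarith [hx.2]))

theorem abs_nodeRatio_lt (hxy : x < y) (hy : y < d + 1)
    (hx0 : (descPochhammer ℝ (d + 1)).eval x ≠ 0)
    (hle : |(descPochhammer ℝ (d + 1)).eval x| ≤ |(descPochhammer ℝ (d + 1)).eval y|) :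
    |nodeRatio d x| < |nodeRatio d y| := by
  have hqy := nodeRatio_denom_pos hy
  have hq : (descPochhammer ℝ (d + 1)).eval (2 * d + 1 - y) <
      (descPochhammer ℝ (d + 1)).eval (2 * d + 1 - x) :=
    strictMonoOn_descPochhammer_eval d (Set.mem_Ici.mpr (by linarith))
      (Set.mem_Ici.mpr (by linarith)) (by linarith)
  rw [nodeRatio, nodeRatio, abs_div, abs_div, abs_of_pos hqy, abs_of_pos (hqy.trans hq)]
  exact div_lt_div₀' hle hq ((abs_pos.mpr hx0).trans_le hle) hqy

/- Reflection `x ↦ d - x` preserves `|p|` and the shift `x ↦ x + 1` does not decrease it for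
`2x ≥ d`, while `p(2d+1-x)` strictly decreases. -/
theorem exists_abs_nodeRatio_lt (hx : x ∈ Set.Icc (0 : ℝ) (d - 1))
    (hx0 : (descPochhammer ℝ (d + 1)).eval x ≠ 0) :
    ∃ y ∈ Set.Icc (0 : ℝ) d, |nodeRatio d x| < |nodeRatio d y| := by
  obtain ⟨h0, h1⟩ := hx
  rcases lt_or_ge (2 * x) d with h | h
  · refine ⟨d - x, ⟨by linarith, by linarith⟩, abs_nodeRatio_lt (by linarith) (by linarith) hx0 ?_⟩
    rw [descPochhammer_eval_natCast_sub, abs_mul, abs_neg_one_pow, one_mul]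
  · refine ⟨x + 1, ⟨by linarith, by linarith⟩, abs_nodeRatio_lt (by linarith) (by linarith) hx0 ?_⟩
    have hshift := congrArg abs (descPochhammer_eval_add_one_mul (d + 1) x)
    rw [abs_mul, abs_mul, abs_of_nonneg (by linarith : 0 ≤ x + 1),
      abs_of_nonpos (by push_cast; linarith : x + 1 - (d + 1 : ℕ) ≤ 0)] at hshift
    push_cast at hshift
    refine le_of_mul_le_mul_right ?_ (by linarith : 0 < d - x)
    nlinarith [abs_nonneg ((descPochhammer ℝ (d + 1)).eval x)]

theorem continuousOn_nodeRatio (d : ℕ) : ContinuousOn (nodeRatio d) (Set.Iio (d + 1 : ℝ)) :=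
  (Polynomial.continuous _).continuousOn.div
    ((Polynomial.continuous _).comp (continuous_sub_left _)).continuousOn
    fun _ hx ↦ (nodeRatio_denom_pos hx).ne'

theorem mem_Ioo_of_isMaxOn_abs_nodeRatio (hd : 1 ≤ d) (hx : x ∈ Set.Icc (0 : ℝ) d)
    (hmax : IsMaxOn (fun t ↦ |nodeRatio d t|) (Set.Icc 0 d) x) : x ∈ Set.Ioo (d - 1 : ℝ) d := by
  have hd' : (1 : ℝ) ≤ d := Nat.one_le_cast.mpr hd
  have hx0 : nodeRatio d x ≠ 0 := by
    have hneg : nodeRatio d (d - 1 / 2) < 0 :=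
      nodeRatio_neg ⟨by linarith, by linarith⟩
    have hle := hmax (show (d - 1 / 2 : ℝ) ∈ Set.Icc (0 : ℝ) d from ⟨by linarith, by linarith⟩)
    exact abs_pos.mp ((abs_pos.mpr hneg.ne).trans_le hle)
  constructor
  · by_contra! hle
    obtain ⟨y, hy, hlt⟩ := exists_abs_nodeRatio_lt ⟨hx.1, hle⟩
      (mt (nodeRatio_eq_zero_iff (by linarith)).mpr hx0)
    exact hlt.not_ge (hmax hy)
  · exact hx.2.lt_of_ne fun h ↦ hx0 (h ▸ nodeRatio_natCast le_rfl)

theorem exists_nodeRatio_le_and_lt_neg (hd : 1 ≤ d) :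
    ∃ e ∈ Set.Ioo (d - 1 : ℝ) d, ∀ t ∈ Set.Icc (0 : ℝ) d,
      nodeRatio d e ≤ nodeRatio d t ∧ nodeRatio d t < -nodeRatio d e := by
  obtain ⟨e, he, hmax⟩ := isCompact_Icc.exists_isMaxOn
    (Set.nonempty_Icc.mpr (Nat.cast_nonneg d))
    ((continuousOn_nodeRatio d).mono fun t ht ↦ ht.2.trans_lt (lt_add_one _)).abs
  have he' := mem_Ioo_of_isMaxOn_abs_nodeRatio hd he hmax
  have hneg := nodeRatio_neg he'
  refine ⟨e, he', fun t ht ↦ ?_⟩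
  have hle : |nodeRatio d t| ≤ -nodeRatio d e := abs_of_neg hneg ▸ hmax ht
  refine ⟨by linarith [neg_abs_le (nodeRatio d t)], ((le_abs_self _).trans hle).lt_of_ne ?_⟩
  intro heq
  have htmax : IsMaxOn (fun t ↦ |nodeRatio d t|) (Set.Icc 0 d) t := by
    rw [isMaxOn_iff, heq, abs_neg]
    exact isMaxOn_iff.mp hmax
  linarith [nodeRatio_neg (mem_Ioo_of_isMaxOn_abs_nodeRatio hd ht htmax)]

theorem hasDerivAt_nodeRatio (hx : x < d + 1) :
    HasDerivAt (nodeRatio d)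
      ((deriv (descPochhammer ℝ (d + 1)).eval x *
          (descPochhammer ℝ (d + 1)).eval (2 * d + 1 - x) +
        (descPochhammer ℝ (d + 1)).eval x *
          deriv (descPochhammer ℝ (d + 1)).eval (2 * d + 1 - x)) /
        (descPochhammer ℝ (d + 1)).eval (2 * d + 1 - x) ^ 2) x := by
  have hp (y : ℝ) := (differentiable_descPochhammer_eval (𝕜 := ℝ) (n := d + 1) y).hasDerivAt
  refine HasDerivAt.congr_deriv
    ((hp x).div ((hp _).comp_const_sub (2 * d + 1 : ℝ) x) (nodeRatio_denom_pos hx).ne') ?_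
  rw [mul_neg, sub_neg_eq_add]

theorem logDeriv_nodeRatio (hx : x ∈ Set.Ioo (d - 1 : ℝ) d) :
    logDeriv (nodeRatio d) x =
      ∑ k ∈ Finset.range (d + 1), (1 / (x - k) + 1 / (2 * d + 1 - x - k)) := by
  have hprod : nodeRatio d =
      fun z ↦ ∏ k ∈ Finset.range (d + 1), ((z - k) / (2 * d + 1 - z - k) : ℝ) := by
    funext z
    rw [nodeRatio, descPochhammer_eval_eq_prod_range, descPochhammer_eval_eq_prod_range,
      Finset.prod_div_distrib]
  have hnum : ∀ k ∈ Finset.range (d + 1), x - k ≠ 0 := fun k hk h ↦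
    (descPochhammer_eval_neg hx).ne <|
      descPochhammer_eval_eq_zero_iff.mpr ⟨k, Finset.mem_range.mp hk, sub_eq_zero.mp h⟩
  have hden : ∀ k ∈ Finset.range (d + 1), 2 * d + 1 - x - k ≠ 0 := fun k hk ↦ by
    have := Nat.cast_le (α := ℝ).mpr (Finset.mem_range_succ_iff.mp hk)
    linarith [hx.2]
  have hterm : ∀ k ∈ Finset.range (d + 1), logDeriv (fun z : ℝ ↦ (z - k) / (2 * d + 1 - z - k)) x =
      1 / (x - k) + 1 / (2 * d + 1 - x - k) := fun k hk ↦ by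
    rw [logDeriv_div x (hnum k hk) (hden k hk) (by fun_prop) (by fun_prop)]
    simp [logDeriv_apply, neg_div]
  rw [hprod, logDeriv_prod, Finset.sum_congr rfl hterm]
  · exact fun k hk ↦ div_ne_zero (hnum k hk) (hden k hk)
  · exact fun k hk ↦ DifferentiableAt.div (by fun_prop) (by fun_prop) (hden k hk)

theorem strictAntiOn_logDeriv_nodeRatio (d : ℕ) :
    StrictAntiOn (logDeriv (nodeRatio d)) (Set.Ioo (d - 1 : ℝ) d) := by
  intro x hx y hy hxy
  rw [logDeriv_nodeRatio hx, logDeriv_nodeRatio hy]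
  refine Finset.sum_lt_sum_of_nonempty (by simp) fun k hk ↦ ?_
  have hkd : (k : ℝ) ≤ d := Nat.cast_le.mpr (Finset.mem_range_succ_iff.mp hk)
  have hpos : 0 < (x - k) * (y - k) := by
    rcases (Finset.mem_range_succ_iff.mp hk).lt_or_eq with h | rfl
    · have hkd' : (k : ℝ) + 1 ≤ d := mod_cast h
      exact mul_pos (by linarith [hx.1]) (by linarith [hy.1])
    · exact mul_pos_of_neg_of_neg (by linarith [hx.2]) (by linarith [hy.2])
  have hlt : (x - k) * (y - k) < (2 * d + 1 - x - k) * (2 * d + 1 - y - k) := by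
    nlinarith [hx.1, hx.2, hy.1, hy.2]
  have hdiv := mul_lt_mul_of_pos_left (one_div_lt_one_div_of_lt hpos hlt) (sub_pos.mpr hxy)
  obtain ⟨hx', hy'⟩ := mul_ne_zero_iff.mp hpos.ne'
  obtain ⟨hx'', hy''⟩ := mul_ne_zero_iff.mp (hpos.trans hlt).ne'
  have hleft : 1 / (x - k) - 1 / (y - k) = (y - x) * (1 / ((x - k) * (y - k))) := by
    field_simp; ring
  have hright : 1 / (2 * d + 1 - y - k) - 1 / (2 * d + 1 - x - k) =
      (y - x) * (1 / ((2 * d + 1 - x - k) * (2 * d + 1 - y - k))) := by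
    field_simp; ring
  linarith

theorem deriv_nodeRatio_pos_of_lt (he : e ∈ Set.Ioo (d - 1 : ℝ) d)
    (he0 : deriv (nodeRatio d) e = 0) (hx : x ∈ Set.Ioo e d) : 0 < deriv (nodeRatio d) x := by
  have hx' : x ∈ Set.Ioo (d - 1 : ℝ) d := ⟨he.1.trans hx.1, hx.2⟩
  have hneg := nodeRatio_neg hx'
  have hlog : logDeriv (nodeRatio d) x < 0 :=
    (strictAntiOn_logDeriv_nodeRatio d he hx' hx.1).trans_eq (by simp [logDeriv_apply, he0])
  rw [← div_mul_cancel₀ (deriv (nodeRatio d) x) hneg.ne]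
  exact mul_pos_of_neg_of_neg hlog hneg

theorem deriv_nodeRatio_pos_of_le (hx : x ∈ Set.Ico (d : ℝ) (d + 1)) :
    0 < deriv (nodeRatio d) x := by
  have hq := nodeRatio_denom_pos hx.2
  have hp : 0 ≤ (descPochhammer ℝ (d + 1)).eval x :=
    descPochhammer_nonneg (by push_cast; linarith [hx.1])
  have hp' := deriv_descPochhammer_eval_pos hx.1
  have hq' := deriv_descPochhammer_eval_pos (d := d) (x := 2 * d + 1 - x) (by linarith [hx.2])
  rw [(hasDerivAt_nodeRatio hx.2).deriv]
  positivity

theorem deriv_nodeRatio_pos (he : e ∈ Set.Ioo (d - 1 : ℝ) d) (he0 : deriv (nodeRatio d) e = 0)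
    (hx : x ∈ Set.Ioo e (d + 1)) : 0 < deriv (nodeRatio d) x :=
  (lt_or_ge x d).elim (fun h ↦ deriv_nodeRatio_pos_of_lt he he0 ⟨hx.1, h⟩)
    fun h ↦ deriv_nodeRatio_pos_of_le ⟨h, hx.2⟩

theorem strictMonoOn_nodeRatio (he : e ∈ Set.Ioo (d - 1 : ℝ) d)
    (he0 : deriv (nodeRatio d) e = 0) : StrictMonoOn (nodeRatio d) (Set.Ico e (d + 1)) := by
  refine strictMonoOn_of_deriv_pos (convex_Ico _ _)
    ((continuousOn_nodeRatio d).mono Set.Ico_subset_Iio_self) fun x hx ↦ ?_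
  exact deriv_nodeRatio_pos he he0 (interior_Ico (a := e) ▸ hx)

theorem tendsto_nodeRatio_atTop (d : ℕ) :
    Filter.Tendsto (nodeRatio d) (nhdsWithin (d + 1 : ℝ) (Set.Iio (d + 1))) Filter.atTop := by
  have hq : Filter.Tendsto (fun x : ℝ ↦ (descPochhammer ℝ (d + 1)).eval (2 * d + 1 - x))
      (nhdsWithin (d + 1 : ℝ) (Set.Iio (d + 1))) (nhdsWithin 0 (Set.Ioi 0)) := by
    refine tendsto_nhdsWithin_of_tendsto_nhds_of_eventually_within _ ?_
      (Filter.eventually_of_mem self_mem_nhdsWithin fun _ hx ↦ nodeRatio_denom_pos hx)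
    have hcont : Continuous fun x : ℝ ↦ (descPochhammer ℝ (d + 1)).eval (2 * d + 1 - x) :=
      (Polynomial.continuous _).comp (continuous_sub_left _)
    refine (hcont.tendsto' _ _ ?_).mono_left nhdsWithin_le_nhds
    rw [show (2 * d + 1 - (d + 1) : ℝ) = d by ring]
    exact descPochhammer_eval_coe_nat_of_lt d.lt_succ_self
  exact Filter.Tendsto.pos_mul_atTop (descPochhammer_pos (by push_cast; linarith))
    (((descPochhammer ℝ (d + 1)).continuous.tendsto _).mono_left nhdsWithin_le_nhds)
    hq.inv_tendsto_nhdsGT_zero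

theorem image_nodeRatio_Ioo (he : e ∈ Set.Ioo (d - 1 : ℝ) d) (he0 : deriv (nodeRatio d) e = 0) :
    nodeRatio d '' Set.Ioo e (d + 1) = Set.Ioi (nodeRatio d e) := by
  have he1 : e < d + 1 := by linarith [he.2]
  refine subset_antisymm ?_ ?_
  · rintro _ ⟨x, hx, rfl⟩
    exact strictMonoOn_nodeRatio he he0 ⟨le_rfl, he1⟩ ⟨hx.1.le, hx.2⟩ hx.1
  · have hcont := continuousOn_nodeRatio d
    exact isPreconnected_Ioo.intermediate_value_Ioi
      (Filter.le_principal_iff.mpr (Ioo_mem_nhdsGT he1))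
      (Filter.le_principal_iff.mpr (Ioo_mem_nhdsLT he1)) (hcont.mono Set.Ioo_subset_Iio_self)
      ((hcont.continuousAt (Iio_mem_nhds he1)).mono_left nhdsWithin_le_nhds)
      (tendsto_nodeRatio_atTop d)

theorem exists_continuousOn_nodeRatio_eq_mul (hd : 1 ≤ d) {c : ℝ} (hc : 1 ≤ |c|) (hc1 : c ≠ 1) :
    ∃ g : ℝ → ℝ, ContinuousOn g (Set.Icc 0 d) ∧ ∀ t ∈ Set.Icc (0 : ℝ) d,
      g t ∈ Set.Ioo (d - 1 : ℝ) (d + 1) ∧ nodeRatio d t = c * nodeRatio d (g t) ∧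
        0 < deriv (nodeRatio d) (g t) := by
  obtain ⟨e, he, hbound⟩ := exists_nodeRatio_le_and_lt_neg hd
  have hd' : (1 : ℝ) ≤ d := Nat.one_le_cast.mpr hd
  have he0 : deriv (nodeRatio d) e = 0 := by
    refine IsLocalMin.deriv_eq_zero ?_
    filter_upwards [Ioo_mem_nhds he.1 he.2] with t ht
    exact (hbound t ⟨by linarith [ht.1], ht.2.le⟩).1
  have himage := image_nodeRatio_Ioo he he0
  have hmaps : Set.MapsTo (fun t ↦ nodeRatio d t / c) (Set.Icc 0 d) (Set.Ioi (nodeRatio d e)) :=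
    fun t ht ↦ lt_div_of_one_le_abs (nodeRatio_neg he) (hbound t ht).1 (hbound t ht).2 hc hc1
  refine ⟨fun t ↦ Function.invFunOn (nodeRatio d) (Set.Ioo e (d + 1)) (nodeRatio d t / c), ?_,
    fun t ht ↦ ?_⟩
  · have hinv := continuousOn_invFunOn_of_strictMonoOn
      ((strictMonoOn_nodeRatio he he0).mono Set.Ioo_subset_Ico_self) isOpen_Ioo
      (himage ▸ isOpen_Ioi)
    rw [himage] at hinv
    exact hinv.comp (((continuousOn_nodeRatio d).mono fun t ht ↦
      ht.2.trans_lt (lt_add_one _)).div_const c) hmaps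
  · have hmem : nodeRatio d t / c ∈ nodeRatio d '' Set.Ioo e (d + 1) := himage ▸ hmaps ht
    have hg := Function.invFunOn_mem hmem
    have hc0 : c ≠ 0 := by rintro rfl; norm_num at hc
    refine ⟨⟨he.1.trans hg.1, hg.2⟩, ?_, deriv_nodeRatio_pos he he0 hg⟩
    rw [Function.invFunOn_eq hmem, mul_div_cancel₀ _ hc0]

end NodeRatio

/-- The affine point of `ℙ²` on the two lines `R_α = 0` and `R_{2d+1-γ} = 0`, where the family `R_k`
is extended to complex `k`. These lines are the tangents of a conic, so that `γ ↦ tangentPt d α γ`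
parametrizes the tangent `R_α = 0`. -/
noncomputable def tangentPt (d : ℕ) (α γ : ℂ) : Fin 3 → ℂ :=
  ![α * (2 * d + 1 - γ) / (2 * d + 1), (2 * d + 1 - α) * γ / (2 * d + 1), 1]

/-- Restriction to the line `R_α = 0`, as a polynomial in the parameter `γ` of
`tangentPt d α γ`. -/
noncomputable def tangentRestrict (d : ℕ) (α : ℂ) :
    MvPolynomial (Fin 3) ℂ →ₐ[ℂ] Polynomial ℂ :=
  aeval ![Polynomial.C (α / (2 * d + 1)) * (Polynomial.C (2 * d + 1 : ℂ) - Polynomial.X),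
    Polynomial.C ((2 * d + 1 - α) / (2 * d + 1)) * Polynomial.X, 1]

/-- The member `P - cQ` of the pencil of curves spanned by `P` and `Q`: the fiber of `P / Q` over
`c`. -/
noncomputable def pencil (d : ℕ) (c : ℂ) : MvPolynomial (Fin 3) ℂ :=
  P3 d - C c * Q3 d

section TangentPt

variable {d : ℕ}

theorem tangentPt_eq_tangentPt_sub (d : ℕ) (α γ : ℂ) :
    tangentPt d α γ = tangentPt d (2 * d + 1 - γ) (2 * d + 1 - α) := by
  unfold tangentPt
  ring_nf

theorem continuousOn_eval_tangentPt {s : Set ℝ} {g : ℝ → ℝ} (hg : ContinuousOn g s)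
    (A : MvPolynomial (Fin 3) ℂ) :
    ContinuousOn (fun t : ℝ ↦ eval (tangentPt d t (g t)) A) s := by
  have hpt : ContinuousOn (fun t : ℝ ↦ tangentPt d t (g t)) s := by
    refine continuousOn_pi.mpr fun i ↦ ?_
    fin_cases i <;> simp only [tangentPt] <;> fun_prop
  exact (MvPolynomial.continuous_eval A).comp_continuousOn hpt

theorem eval_tangentRestrict (α γ : ℂ) (A : MvPolynomial (Fin 3) ℂ) :
    (tangentRestrict d α A).eval γ = eval (tangentPt d α γ) A := by
  have h : (Polynomial.aeval γ).comp (tangentRestrict d α) = aeval (tangentPt d α γ) := by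
    refine algHom_ext fun i ↦ ?_
    fin_cases i <;> simp [tangentRestrict, tangentPt] <;> ring
  simpa using DFunLike.congr_fun h A

theorem natDegree_tangentRestrict_le (α : ℂ) (A : MvPolynomial (Fin 3) ℂ) :
    (tangentRestrict d α A).natDegree ≤ A.totalDegree := by
  have hcoord : ∀ i, (![Polynomial.C (α / (2 * d + 1)) *
      (Polynomial.C (2 * d + 1 : ℂ) - Polynomial.X),
      Polynomial.C ((2 * d + 1 - α) / (2 * d + 1)) * Polynomial.X, 1] i).natDegree ≤ 1 := by
    intro i
    fin_cases i <;> simp only [Fin.zero_eta, Fin.mk_one, Fin.reduceFinMk, Matrix.cons_val] <;>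
      compute_degree!
  simpa [tangentRestrict] using aeval_natDegree_le A le_rfl _ hcoord

theorem eval_tangentPt_R3 (α γ : ℂ) (k : ℕ) :
    eval (tangentPt d α γ) (R3 d k) = (α - k) * (2 * d + 1 - γ - k) := by
  have hn : (2 * d + 1 : ℂ) ≠ 0 := mod_cast (2 * d).succ_ne_zero
  simp only [R3, tangentPt, map_sub, map_add, map_mul, eval_C, eval_X, Matrix.cons_val]
  field_simp
  ring

theorem rename_swap_R3 {k : ℕ} (hk : k ≤ 2 * d + 1) :
    rename (Equiv.swap 0 1) (R3 d k) = R3 d (2 * d + 1 - k) := by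
  simp only [R3, map_sub, map_add, map_mul, rename_C, rename_X, Equiv.swap_apply_left,
    Equiv.swap_apply_right, Equiv.swap_apply_of_ne_of_ne (show (2 : Fin 3) ≠ 0 by decide)
    (show (2 : Fin 3) ≠ 1 by decide), Nat.cast_sub hk]
  push_cast
  simp only [map_add, map_mul]
  ring

theorem rename_swap_P3 (d : ℕ) : rename (Equiv.swap 0 1) (P3 d) = Q3 d := by
  rw [P3, Q3, map_prod]
  refine Finset.prod_nbij' (2 * d + 1 - ·) (2 * d + 1 - ·) ?_ ?_ ?_ ?_ ?_
  all_goals intro k hk; simp only [Finset.mem_range, Finset.mem_Icc] at hk ⊢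
  any_goals lia
  exact rename_swap_R3 (by lia)

theorem rename_swap_Q3 (d : ℕ) : rename (Equiv.swap 0 1) (Q3 d) = P3 d := by
  rw [← rename_swap_P3, rename_rename, ← Equiv.coe_trans, Equiv.swap_swap, Equiv.coe_refl,
    rename_id_apply]

theorem eval_tangentPt_P3 (α γ : ℂ) :
    eval (tangentPt d α γ) (P3 d) =
      (descPochhammer ℂ (d + 1)).eval α * (descPochhammer ℂ (d + 1)).eval (2 * d + 1 - γ) := by
  simp only [P3, map_prod, eval_tangentPt_R3, descPochhammer_eval_eq_prod_range,
    Finset.prod_mul_distrib]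

theorem eval_tangentPt_Q3 (α γ : ℂ) :
    eval (tangentPt d α γ) (Q3 d) =
      (descPochhammer ℂ (d + 1)).eval (2 * d + 1 - α) * (descPochhammer ℂ (d + 1)).eval γ := by
  have hswap : tangentPt d α γ ∘ Equiv.swap 0 1 = tangentPt d (2 * d + 1 - α) (2 * d + 1 - γ) := by
    funext i
    fin_cases i <;> simp [tangentPt, Equiv.swap_apply_def]
  rw [← rename_swap_P3, eval_rename, hswap, eval_tangentPt_P3, sub_sub_cancel]

theorem eval_tangentPt_pencil (c α γ : ℂ) :
    eval (tangentPt d α γ) (pencil d c) =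
      (descPochhammer ℂ (d + 1)).eval α * (descPochhammer ℂ (d + 1)).eval (2 * d + 1 - γ) -
        c * ((descPochhammer ℂ (d + 1)).eval (2 * d + 1 - α) *
          (descPochhammer ℂ (d + 1)).eval γ) := by
  rw [pencil, map_sub, map_mul, eval_C, eval_tangentPt_P3, eval_tangentPt_Q3]

theorem eval_tangentPt_pencil_ofReal {c x y : ℝ} (hx : x < d + 1) (hy : y < d + 1) :
    eval (tangentPt d x y) (pencil d c) =
      ((descPochhammer ℝ (d + 1)).eval (2 * d + 1 - x) *
        ((descPochhammer ℝ (d + 1)).eval (2 * d + 1 - y) *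
          (nodeRatio d x - c * nodeRatio d y)) : ℝ) := by
  have hqx := (nodeRatio_denom_pos hx).ne'
  have hqy := (nodeRatio_denom_pos hy).ne'
  have hcast (z : ℝ) : (2 * d + 1 - z : ℂ) = (2 * d + 1 - z : ℝ) := by push_cast; rfl
  rw [eval_tangentPt_pencil, hcast, hcast]
  simp only [descPochhammer_eval_ofReal, ← Complex.ofReal_mul, ← Complex.ofReal_sub, nodeRatio]
  congr 1
  field_simp

theorem isHomogeneous_R3 (d k : ℕ) : (R3 d k).IsHomogeneous 1 :=
  ((isHomogeneous_C_mul_X _ _).add (isHomogeneous_C_mul_X _ _)).sub (isHomogeneous_C_mul_X _ _)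

theorem isHomogeneous_P3 (d : ℕ) : (P3 d).IsHomogeneous (d + 1) := by
  simpa [P3] using
    IsHomogeneous.prod (Finset.range (d + 1)) _ _ fun k _ ↦ isHomogeneous_R3 d k

theorem totalDegree_pencil_le (d : ℕ) (c : ℂ) : (pencil d c).totalDegree ≤ d + 1 := by
  have hQ : (Q3 d).IsHomogeneous (d + 1) :=
    rename_swap_P3 d ▸ (isHomogeneous_P3 d).rename_isHomogeneous
  exact ((isHomogeneous_P3 d).sub (by simpa using hQ.C_mul c)).totalDegree_le

end TangentPt

section Factor

variable {d : ℕ} {A B : MvPolynomial (Fin 3) ℂ}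

theorem eval_tangentPt_mem_of_forall_natCast_mem {S : Submodule ℝ ℂ} (hA : A.totalDegree ≤ d)
    (y : ℝ) (h : ∀ i ≤ d, eval (tangentPt d i y) A ∈ S) (x : ℝ) :
    eval (tangentPt d x y) A ∈ S := by
  have hswap (z : ℝ) : eval (tangentPt d z y) A =
      (tangentRestrict d (2 * d + 1 - y) A).eval (algebraMap ℝ ℂ (2 * d + 1 - z)) := by
    rw [eval_tangentRestrict, tangentPt_eq_tangentPt_sub]
    simp
  rw [hswap]
  refine eval_mem_of_forall_eval_node_mem (s := Finset.range (d + 1))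
    (v := fun i : ℕ ↦ (2 * d + 1 - i : ℝ)) (fun i _ j _ hij ↦ by simpa using hij) ?_
    (fun i hi ↦ ?_) _
  · rw [Finset.card_range]
    exact (Polynomial.degree_le_of_natDegree_le
      ((natDegree_tangentRestrict_le _ A).trans hA)).trans_lt (mod_cast d.lt_succ_self)
  · rw [← hswap]
    exact mod_cast h i (Finset.mem_range_succ_iff.mp hi)

theorem hasDerivAt_eval_tangentPt_pencil {c x y : ℝ} (hx : x < d + 1) (hy : y < d + 1)
    (hxy : nodeRatio d x = c * nodeRatio d y) :
    HasDerivAt (fun t : ℝ ↦ eval (tangentPt d x t) (pencil d c))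
      ((descPochhammer ℝ (d + 1)).eval (2 * d + 1 - x) *
        ((descPochhammer ℝ (d + 1)).eval (2 * d + 1 - y) * (-(c * deriv (nodeRatio d) y))) : ℝ)
      y := by
  have hq := ((descPochhammer ℝ (d + 1)).hasDerivAt (2 * d + 1 - y)).comp_const_sub
    (2 * d + 1 : ℝ) y
  have hf := ((hasDerivAt_nodeRatio hy).differentiableAt.hasDerivAt.const_mul c).const_sub
    (nodeRatio d x)
  refine (((hq.mul hf).const_mul _).ofReal_comp.congr_deriv ?_).congr_of_eventuallyEq
    (Filter.eventually_of_mem (Iio_mem_nhds hy) fun t ht ↦ eval_tangentPt_pencil_ofReal hx ht)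
  rw [hxy, sub_self, mul_zero, zero_add]

theorem eval_tangentPt_natCast_pencil {i : ℕ} (hi : i ≤ d) (c γ : ℂ) :
    eval (tangentPt d i γ) (pencil d c) =
      -c * ((descPochhammer ℂ (d + 1)).eval (2 * d + 1 - i : ℂ) *
        (descPochhammer ℂ (d + 1)).eval γ) := by
  rw [eval_tangentPt_pencil, descPochhammer_eval_coe_nat_of_lt (Nat.lt_succ_of_le hi)]
  ring

theorem eval_tangentPt_natCast_mem_span {c : ℂ} (hc : c ≠ 0) (hAd : A ∣ pencil d c) {i : ℕ}
    (hi : i ≤ d) (y : ℝ) :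
    eval (tangentPt d i y) A ∈ Submodule.span ℝ {eval (tangentPt d i (2 * d + 1)) A} := by
  have heval_ne {γ : ℂ} (hγ : (descPochhammer ℂ (d + 1)).eval γ ≠ 0) :
      (tangentRestrict d i A).eval γ ≠ 0 := by
    rw [eval_tangentRestrict]
    refine ne_zero_of_dvd_ne_zero ?_ (map_dvd (eval (tangentPt d i γ)) hAd)
    rw [eval_tangentPt_natCast_pencil hi]
    exact mul_ne_zero (neg_ne_zero.mpr hc)
      (mul_ne_zero (descPochhammer_eval_sub_natCast_ne_zero hi) hγ)
  have hroots : ∀ a ∈ (tangentRestrict d i A).roots, a ∈ (algebraMap ℝ ℂ).range := fun a ha ↦ by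
    obtain ⟨k, -, rfl⟩ := descPochhammer_eval_eq_zero_iff.mp
      (not_imp_not.mp heval_ne (Polynomial.isRoot_of_mem_roots ha))
    exact ⟨k, by simp⟩
  have hn : (descPochhammer ℂ (d + 1)).eval (algebraMap ℝ ℂ (2 * d + 1)) ≠ 0 := by
    simpa using descPochhammer_eval_two_mul_add_one_ne_zero (R := ℂ) d
  have hmem := eval_mem_span_eval_of_splits_of_roots_mem_range (IsAlgClosed.splits _) hroots
    y (2 * d + 1) (heval_ne hn)
  simpa [eval_tangentRestrict] using hmem

theorem eval_tangentPt_mem_span {c : ℂ} (hc : c ≠ 0) (hAd : A ∣ pencil d c)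
    (hA : A.totalDegree ≤ d) (x y : ℝ) :
    eval (tangentPt d x y) A ∈ Submodule.span ℝ {eval (tangentPt d 0 (2 * d + 1)) A} := by
  refine eval_tangentPt_mem_of_forall_natCast_mem hA y (fun i hi ↦ ?_) x
  have hcorner : eval (tangentPt d i (2 * d + 1)) A ∈
      Submodule.span ℝ {eval (tangentPt d 0 (2 * d + 1)) A} := by
    rw [tangentPt_eq_tangentPt_sub d i, sub_self]
    simpa using eval_tangentPt_natCast_mem_span hc hAd d.zero_le (2 * d + 1 - i)
  exact Submodule.span_le.mpr (Set.singleton_subset_iff.mpr hcorner)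
    (eval_tangentPt_natCast_mem_span hc hAd hi y)

theorem exists_ofReal_eq_of_pencil_eq_mul {c : ℂ} (hc : c ≠ 0) (h : pencil d c = A * B)
    (hA : A.totalDegree ≤ d) (hB : B.totalDegree ≤ d) : ∃ r : ℝ, (r : ℂ) = c := by
  obtain ⟨a, ha⟩ := Submodule.mem_span_singleton.mp
    (eval_tangentPt_mem_span hc ⟨B, h⟩ hA (2 * d + 1) 0)
  obtain ⟨b, hb⟩ := Submodule.mem_span_singleton.mp
    (eval_tangentPt_mem_span hc ⟨A, h.trans (mul_comm A B)⟩ hB (2 * d + 1) 0)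
  have hn := descPochhammer_eval_two_mul_add_one_ne_zero (R := ℂ) d
  have hleft : eval (tangentPt d 0 (2 * d + 1)) A * eval (tangentPt d 0 (2 * d + 1)) B =
      -c * (descPochhammer ℂ (d + 1)).eval (2 * d + 1 : ℂ) ^ 2 := by
    rw [← map_mul, ← h, eval_tangentPt_pencil]
    simp [pow_two]
  have hright : eval (tangentPt d (2 * d + 1) 0) A * eval (tangentPt d (2 * d + 1) 0) B =
      (descPochhammer ℂ (d + 1)).eval (2 * d + 1 : ℂ) ^ 2 := by
    rw [← map_mul, ← h, eval_tangentPt_pencil]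
    simp [pow_two]
  have hab : a * b * -c = 1 := by
    refine mul_right_cancel₀ (pow_ne_zero 2 hn) ?_
    push_cast at ha hb
    rw [mul_assoc, ← hleft, one_mul, ← hright, ← ha, ← hb, Complex.real_smul, Complex.real_smul]
    ring
  refine ⟨-(a * b)⁻¹, ?_⟩
  push_cast
  rw [← eq_inv_of_mul_eq_one_right hab, neg_neg]

theorem eval_tangentPt_eq_zero_iff_of_pencil_eq_mul {c x y : ℝ} (hc : c ≠ 0)
    (h : pencil d c = A * B) (hx : x < d + 1) (hy : y < d + 1)
    (hxy : nodeRatio d x = c * nodeRatio d y) (hy' : deriv (nodeRatio d) y ≠ 0) :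
    eval (tangentPt d x y) A = 0 ↔ eval (tangentPt d x y) B ≠ 0 := by
  refine ⟨fun hA hB ↦ ?_, fun hB ↦ ?_⟩
  · have hdiff (D : MvPolynomial (Fin 3) ℂ) :=
      ((tangentRestrict d x D).hasDerivAt (y : ℂ)).comp_ofReal
    have hmul := (hdiff A).mul (hdiff B)
    simp only [eval_tangentRestrict, hA, hB, mul_zero, zero_mul, add_zero] at hmul
    have hprod : (fun t : ℝ ↦ eval (tangentPt d x t) (pencil d c)) =
        (fun t : ℝ ↦ eval (tangentPt d x t) A) * fun t : ℝ ↦ eval (tangentPt d x t) B := by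
      funext t
      rw [h, map_mul, Pi.mul_apply]
    have hderiv := hasDerivAt_eval_tangentPt_pencil hx hy hxy
    rw [hprod] at hderiv
    refine mul_ne_zero (nodeRatio_denom_pos hx).ne' (mul_ne_zero (nodeRatio_denom_pos hy).ne'
      (neg_ne_zero.mpr (mul_ne_zero hc hy'))) ?_
    exact Complex.ofReal_eq_zero.mp (hderiv.unique hmul)
  · have hzero : eval (tangentPt d x y) (pencil d c) = 0 := by
      rw [eval_tangentPt_pencil_ofReal hx hy, hxy, sub_self, mul_zero, mul_zero,
        Complex.ofReal_zero]
    rw [h, map_mul] at hzero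
    exact (mul_eq_zero_iff_right hB).mp hzero

theorem exists_eval_tangentPt_natCast_ne_zero {c : ℂ} (hAd : A ∣ pencil d c)
    (hA : A.totalDegree ≤ d) : ∃ i ≤ d, eval (tangentPt d i d) A ≠ 0 := by
  by_contra! hzero
  have hmem := eval_tangentPt_mem_of_forall_natCast_mem (S := ⊥) hA d
    (fun i hi ↦ by simpa using hzero i hi) (2 * d + 1)
  refine mul_ne_zero (descPochhammer_eval_two_mul_add_one_ne_zero (R := ℂ) d)
    (descPochhammer_eval_sub_natCast_ne_zero d.le_refl) ?_
  have hdvd := map_dvd (eval (tangentPt d (2 * d + 1) d)) hAd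
  simpa [eval_tangentPt_pencil, descPochhammer_eval_coe_nat_of_lt d.lt_succ_self,
    show eval (tangentPt d (2 * d + 1) d) A = 0 by simpa using hmem] using hdvd

theorem pencil_ne_mul_of_one_le_abs (hd : 1 ≤ d) {c : ℝ} (hc : 1 ≤ |c|) (hc1 : c ≠ 1)
    (hA : A.totalDegree ≤ d) (hB : B.totalDegree ≤ d) : pencil d c ≠ A * B := by
  intro h
  have hc0 : c ≠ 0 := by rintro rfl; norm_num at hc
  obtain ⟨g, hg, harc⟩ := exists_continuousOn_nodeRatio_eq_mul hd hc hc1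
  have hnode {i : ℕ} (hi : i ≤ d) : (i : ℝ) ∈ Set.Icc (0 : ℝ) d :=
    ⟨i.cast_nonneg, Nat.cast_le.mpr hi⟩
  have hend {i : ℕ} (hi : i ≤ d) : g i = d := by
    obtain ⟨hmem, heq, -⟩ := harc i (hnode hi)
    rw [nodeRatio_natCast hi, eq_comm, mul_eq_zero_iff_left hc0] at heq
    exact eq_natCast_of_nodeRatio_eq_zero hmem heq
  have hne {D : MvPolynomial (Fin 3) ℂ} (hD : D.totalDegree ≤ d)
      (hDd : D ∣ pencil d c) :
      ¬ ∀ t ∈ Set.Icc (0 : ℝ) d, eval (tangentPt d t (g t)) D = 0 := fun hzero ↦ by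
    obtain ⟨i, hi, hne⟩ := exists_eval_tangentPt_natCast_ne_zero hDd hD
    exact hne (by simpa [hend hi] using hzero i (hnode hi))
  have hdich := forall_eq_zero_or_forall_eq_zero_of_isPreconnected isPreconnected_Icc isClosed_Icc
    (continuousOn_eval_tangentPt hg A) (continuousOn_eval_tangentPt hg B) fun t ht ↦
      eval_tangentPt_eq_zero_iff_of_pencil_eq_mul hc0 h (ht.2.trans_lt (lt_add_one _))
        (harc t ht).1.2 (harc t ht).2.1 (harc t ht).2.2.ne'
  exact hdich.elim (hne hA ⟨B, h⟩) (hne hB ⟨A, h.trans (mul_comm A B)⟩)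

end Factor

section Pencil

variable {d : ℕ} {c : ℂ}

theorem irreducible_pencil_of_one_le_norm (hd : 1 ≤ d) (hc : 1 ≤ ‖c‖) (hc1 : c ≠ 1) :
    Irreducible (pencil d c) := by
  have hc0 : c ≠ 0 := by rintro rfl; norm_num at hc
  have hroot : eval (tangentPt d 0 0) (pencil d c) = 0 := by simp [eval_tangentPt_pencil]
  refine irreducible_of_forall_eq_mul_totalDegree_le (not_isUnit_of_eval_eq_zero hroot)
    (totalDegree_pencil_le d c) fun A B h hA hB ↦ ?_
  obtain ⟨r, rfl⟩ := exists_ofReal_eq_of_pencil_eq_mul hc0 h hA hB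
  rw [Complex.norm_real] at hc
  exact pencil_ne_mul_of_one_le_abs hd hc (mod_cast hc1) hA hB h

theorem irreducible_pencil_inv_iff (hc : c ≠ 0) :
    Irreducible (pencil d c⁻¹) ↔ Irreducible (pencil d c) := by
  have hunit : IsUnit (C (-c) : MvPolynomial (Fin 3) ℂ) := (neg_ne_zero.mpr hc).isUnit.map C
  have hswap : renameEquiv ℂ (Equiv.swap 0 1) (pencil d c) =
      C (-c) * (pencil d c⁻¹) := by
    rw [pencil, pencil, renameEquiv_apply, map_sub, map_mul, rename_C, rename_swap_P3,
      rename_swap_Q3, mul_sub, ← mul_assoc, ← C_mul, neg_mul, mul_inv_cancel₀ hc]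
    simp only [map_neg, map_one]
    ring
  rw [← irreducible_isUnit_mul hunit, ← hswap, MulEquiv.irreducible_iff]

theorem not_irreducible_P3 (hd : 1 ≤ d) : ¬ Irreducible (P3 d) := by
  rw [P3, Finset.prod_range_succ]
  refine not_irreducible_mul_of_eval_eq_zero (u := tangentPt d 0 0) (v := tangentPt d d 0) ?_ ?_
  · rw [map_prod]
    exact Finset.prod_eq_zero (Finset.mem_range.mpr hd) (by simp [eval_tangentPt_R3])
  · simp [eval_tangentPt_R3]

theorem not_irreducible_P3_sub_Q3 (hd : 1 ≤ d) : ¬ Irreducible (P3 d - Q3 d) := by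
  obtain ⟨G, hG⟩ := rename_swap_P3 d ▸ X_sub_X_dvd_sub_rename_swap 0 1 (P3 d)
  have hzero : eval (tangentPt d 0 d) (P3 d - Q3 d) = 0 := by
    simp [eval_tangentPt_P3, eval_tangentPt_Q3, descPochhammer_eval_coe_nat_of_lt d.lt_succ_self]
  have hne : eval (tangentPt d 0 d) (X 0 - X 1) ≠ 0 := by
    have hn : (2 * d + 1 : ℂ) ≠ 0 := mod_cast (2 * d).succ_ne_zero
    simp [tangentPt, hn, Nat.one_le_iff_ne_zero.mp hd]
  rw [hG, map_mul] at hzero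
  rw [hG]
  exact not_irreducible_mul_of_eval_eq_zero (u := tangentPt d 0 0) (by simp [tangentPt])
    ((mul_eq_zero_iff_left hne).mp hzero)

end Pencil

/-- For `c ∈ ℂ`, the homogeneous polynomial `P - cQ` is irreducible in `ℂ[x,y,z]`
if and only if `c ∉ {0,1}`: among the fibers of `F` over `ℂ`, exactly the fibers
over `0` and `1` are reducible. -/
theorem stmt11 (d : ℕ) (hd : 1 ≤ d) (c : ℂ) :
    Irreducible (P3 d - C c * Q3 d) ↔ (c ≠ 0 ∧ c ≠ 1) := by
  change Irreducible (pencil d c) ↔ _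
  refine ⟨fun h ↦ ⟨?_, ?_⟩, fun ⟨hc0, hc1⟩ ↦ ?_⟩
  · rintro rfl
    exact not_irreducible_P3 hd (by simpa [pencil] using h)
  · rintro rfl
    exact not_irreducible_P3_sub_Q3 hd (by simpa [pencil] using h)
  · rcases le_total 1 ‖c‖ with hc | hc
    · exact irreducible_pencil_of_one_le_norm hd hc hc1
    · have hinv : 1 ≤ ‖c⁻¹‖ := by
        rw [norm_inv]
        exact (one_le_inv₀ (norm_pos_iff.mpr hc0)).mpr hc
      exact (irreducible_pencil_inv_iff hc0).mp
        (irreducible_pencil_of_one_le_norm hd hinv (inv_ne_one.mpr hc1))
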